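/- (Bondy–Chvátal closure, Hamiltonian path) Let G be a finite simple graph on n vertices and let u and v be two distinct nonadjacent vertices of G with deg(u) + deg(v) ≥ n − 1. Then G has a Hamiltonian path if and only if the graph G + uv obtained from G by adding the edge uv has a Hamiltonian path. -/

import Mathlib

/-!
Remove `uv` from a Hamiltonian path of `G + uv` that uses it: what is left is a path `A` ending in
`u` and a path `B` starting in `v`, which together cover all vertices. If `A = P ++ Q` with `Q`
nonempty, `u` adjacent to the last vertex of `P` (or `P` empty) and `v` adjacent to the first vertex
of `Q`, then `P ++ Q.reverse ++ B` is a Hamiltonian path of `G`. If there is no such cut, the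
successors in `A` of the neighbors of `u` and the first vertex of `A` are all nonadjacent to `v`, so
`u` and `v` together have fewer than `|A|` neighbors in `A`. By symmetry, if `B` admits no such cut
either, they have fewer than `|B|` neighbors in `B`, whence `deg u + deg v ≤ n - 2`.
-/

section Cuts

variable {α : Type*} {p q : α → Bool}

theorem countP_cons_add_countP_le_length {x : α} {l : List α}
    (hchain : (x :: l).IsChain fun a b => p a → ¬ q b)
    (hlast : ∀ a ∈ (x :: l).getLast?, ¬ p a) :
    (x :: l).countP p + l.countP q ≤ l.length := by
  induction l generalizing x with
  | nil => simpa using hlast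
  | cons y l ih =>
    obtain ⟨hxy, hchain⟩ := List.isChain_cons_cons.1 hchain
    have htail := ih hchain (by simpa using hlast)
    rw [List.countP_cons (a := x), List.countP_cons (p := q), List.length_cons]
    grind

theorem exists_eq_append_cons_of_length_le_countP_add_countP {l : List α} (hne : l ≠ [])
    (hlast : ∀ a ∈ l.getLast?, ¬ p a) (hcount : l.length ≤ l.countP p + l.countP q) :
    ∃ P b R, l = P ++ b :: R ∧ (∀ a ∈ P.getLast?, p a) ∧ q b := by
  obtain ⟨x, l, rfl⟩ := List.exists_cons_of_ne_nil hne
  by_cases hqx : q x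
  · exact ⟨[], x, l, rfl, by simp, hqx⟩
  have hchain : ¬ (x :: l).IsChain fun a b => p a → ¬ q b := fun hchain => by
    have hle := countP_cons_add_countP_le_length hchain hlast
    rw [List.countP_cons_of_neg hqx, List.length_cons] at hcount
    lia
  rw [List.isChain_iff_forall_rel_of_append_cons_cons] at hchain
  push Not at hchain
  obtain ⟨a, b, P, R, hl, hpa, hqb⟩ := hchain
  exact ⟨P ++ [a], b, R, by simpa using hl, by simpa using hpa, hqb⟩

end Cuts

section Paths

variable {V : Type*} {G : SimpleGraph V} {u v : V}

theorem isChain_adj_reverse_iff {l : List V} : l.reverse.IsChain G.Adj ↔ l.IsChain G.Adj := by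
  simp only [List.isChain_reverse, G.adj_comm]

theorem isChain_adj_append_reverse_append {P Q B : List V} (hPQ : (P ++ Q).IsChain G.Adj)
    (hB : B.IsChain G.Adj) (hu : Q.getLast? = some u) (hv : B.head? = some v)
    (huP : ∀ a ∈ P.getLast?, G.Adj u a) (hvQ : ∀ b ∈ Q.head?, G.Adj v b) :
    (P ++ (Q.reverse ++ B)).IsChain G.Adj := by
  obtain ⟨hP, hQ, -⟩ := List.isChain_append.1 hPQ
  have hQB : (Q.reverse ++ B).IsChain G.Adj :=
    (isChain_adj_reverse_iff.2 hQ).append hB fun b hb y hy => by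
      obtain rfl : v = y := by simpa [hv] using hy
      exact (hvQ b (by simpa using hb)).symm
  refine hP.append hQB fun a ha y hy => ?_
  obtain rfl : u = y := by simpa [hu] using hy
  exact (huP a ha).symm

theorem exists_isChain_adj_perm_append_of_length_le_countP [DecidableRel G.Adj] {A B : List V}
    (hA : A.IsChain G.Adj) (hB : B.IsChain G.Adj)
    (hu : A.getLast? = some u) (hv : B.head? = some v)
    (hcount : A.length ≤ A.countP (G.Adj u ·) + A.countP (G.Adj v ·)) :
    ∃ M : List V, M.IsChain G.Adj ∧ M.Perm (A ++ B) := by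
  obtain ⟨P, b, R, rfl, huP, hvb⟩ := exists_eq_append_cons_of_length_le_countP_add_countP
    (by rintro rfl; simp at hu) (by simp [hu]) hcount
  refine ⟨P ++ ((b :: R).reverse ++ B),
    isChain_adj_append_reverse_append hA hB (by simpa using hu) hv
      (by simpa using huP) (by simpa using hvb), ?_⟩
  rw [List.append_assoc]
  exact ((List.reverse_perm _).append_right B).append_left P

theorem countP_adj_eq_degree [DecidableRel G.Adj] [Fintype (G.neighborSet u)] {l : List V}
    (hl : l.Nodup) (hu : ∀ x, G.Adj u x → x ∈ l) : l.countP (G.Adj u ·) = G.degree u := by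
  classical
  rw [List.countP_eq_length_filter, ← List.toFinset_card_of_nodup (hl.filter _),
    ← G.card_neighborFinset_eq_degree]
  congr 1
  ext x
  simpa using hu x

theorem exists_isChain_adj_perm_append [Fintype (G.neighborSet u)] [Fintype (G.neighborSet v)]
    {A B : List V} (hA : A.IsChain G.Adj) (hB : B.IsChain G.Adj)
    (hu : A.getLast? = some u) (hv : B.head? = some v) (hnodup : (A ++ B).Nodup)
    (huAB : ∀ x, G.Adj u x → x ∈ A ++ B) (hvAB : ∀ x, G.Adj v x → x ∈ A ++ B)
    (hdeg : (A ++ B).length ≤ G.degree u + G.degree v + 1) :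
    ∃ M : List V, M.IsChain G.Adj ∧ M.Perm (A ++ B) := by
  classical
  rw [← countP_adj_eq_degree hnodup huAB, ← countP_adj_eq_degree hnodup hvAB,
    List.countP_append, List.countP_append, List.length_append] at hdeg
  obtain hcountA | hcountB : A.length ≤ A.countP (G.Adj u ·) + A.countP (G.Adj v ·) ∨
      B.length ≤ B.countP (G.Adj v ·) + B.countP (G.Adj u ·) := by lia
  · exact exists_isChain_adj_perm_append_of_length_le_countP hA hB hu hv hcountA
  · obtain ⟨M, hM, hperm⟩ := exists_isChain_adj_perm_append_of_length_le_countP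
      (isChain_adj_reverse_iff.2 hB) (isChain_adj_reverse_iff.2 hA)
      (List.getLast?_reverse.trans hv) (List.head?_reverse.trans hu) (by simpa using hcountB)
    rw [← List.reverse_append] at hperm
    exact ⟨M, hM, hperm.trans (List.reverse_perm _)⟩

theorem isChain_adj_of_isChain_sup_edge_of_notMem {l : List V}
    (hl : l.IsChain (G ⊔ SimpleGraph.edge u v).Adj) (hv : v ∉ l) : l.IsChain G.Adj := by
  refine hl.imp_of_mem_imp fun x y hx hy hxy => ?_
  rw [SimpleGraph.sup_adj, SimpleGraph.edge_adj] at hxy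
  grind

theorem exists_append_of_isChain_sup_edge {l : List V}
    (hl : l.IsChain (G ⊔ SimpleGraph.edge u v).Adj) (hnodup : l.Nodup)
    (hG : ¬ l.IsChain G.Adj) :
    ∃ A B x y, l = A ++ B ∧ A.IsChain G.Adj ∧ B.IsChain G.Adj ∧
      A.getLast? = some x ∧ B.head? = some y ∧ s(x, y) = s(u, v) := by
  rw [List.isChain_iff_forall_rel_of_append_cons_cons] at hG
  push Not at hG
  obtain ⟨x, y, X, Y, rfl, hxy⟩ := hG
  have hs : s(x, y) = s(u, v) := by
    have hadj := List.isChain_iff_forall_rel_of_append_cons_cons.1 hl rfl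
    rw [SimpleGraph.sup_adj, SimpleGraph.edge_adj] at hadj
    exact Sym2.eq_iff.2 (hadj.resolve_left hxy).1
  rw [SimpleGraph.edge, ← hs, ← SimpleGraph.edge] at hl
  rw [List.append_cons] at hl hnodup ⊢
  obtain ⟨hX, hY, -⟩ := List.isChain_append.1 hl
  have hdisj := List.disjoint_of_nodup_append hnodup
  refine ⟨X ++ [x], y :: Y, x, y, rfl,
    isChain_adj_of_isChain_sup_edge_of_notMem hX fun hy => hdisj hy (by simp),
    isChain_adj_of_isChain_sup_edge_of_notMem (SimpleGraph.edge_comm x y ▸ hY)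
      fun hx => hdisj (by simp) hx, by simp, by simp, hs⟩

theorem exists_isChain_adj_perm_of_isChain_sup_edge
    [Fintype (G.neighborSet u)] [Fintype (G.neighborSet v)] {l : List V}
    (hl : l.IsChain (G ⊔ SimpleGraph.edge u v).Adj) (hnodup : l.Nodup)
    (hul : ∀ x, G.Adj u x → x ∈ l) (hvl : ∀ x, G.Adj v x → x ∈ l)
    (hdeg : l.length ≤ G.degree u + G.degree v + 1) :
    ∃ M : List V, M.IsChain G.Adj ∧ M.Perm l := by
  by_cases hG : l.IsChain G.Adj
  · exact ⟨l, hG, .refl l⟩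
  obtain ⟨A, B, x, y, rfl, hA, hB, hx, hy, hxy⟩ := exists_append_of_isChain_sup_edge hl hnodup hG
  obtain ⟨rfl, rfl⟩ | ⟨rfl, rfl⟩ := Sym2.eq_iff.1 hxy
  · exact exists_isChain_adj_perm_append hA hB hx hy hnodup hul hvl hdeg
  · exact exists_isChain_adj_perm_append hA hB hx hy hnodup hvl hul (by lia)

theorem exists_isHamiltonian_of_isChain_adj [DecidableEq V] [Nonempty V] {l : List V}
    (hl : l.IsChain G.Adj) (hcount : ∀ x, l.count x = 1) :
    ∃ (a b : V) (p : G.Walk a b), p.IsHamiltonian := by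
  have hne : l ≠ [] := by
    rintro rfl
    simp at hcount
  refine ⟨_, _, SimpleGraph.Walk.ofSupport l hne hl, fun x => ?_⟩
  rw [SimpleGraph.Walk.support_ofSupport]
  exact hcount x

end Paths

/-- (Bondy–Chvátal, Hamiltonian path) Let `G` be a finite simple graph on `n` vertices and
let `u, v` be distinct nonadjacent vertices with `deg u + deg v ≥ n - 1`. Then `G` has a
Hamiltonian path iff `G + uv` has a Hamiltonian path. -/
theorem stmt_7 {V : Type*} [Fintype V] [DecidableEq V] (G : SimpleGraph V)
    [DecidableRel G.Adj] (u v : V) (huv : u ≠ v) (hadj : ¬ G.Adj u v)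
    (hdeg : Fintype.card V - 1 ≤ G.degree u + G.degree v) :
    (∃ (a b : V) (p : G.Walk a b), p.IsHamiltonian) ↔
      (∃ (a b : V) (p : (G ⊔ SimpleGraph.edge u v).Walk a b), p.IsHamiltonian) := by
  constructor
  · rintro ⟨a, b, p, hp⟩
    exact ⟨a, b, p.mapLe le_sup_left, hp.map (.ofLE le_sup_left) Function.bijective_id⟩
  · rintro ⟨a, b, p, hp⟩
    obtain ⟨M, hM, hperm⟩ := exists_isChain_adj_perm_of_isChain_sup_edge p.isChain_adj_support
      hp.isPath.support_nodup (fun x _ => hp.mem_support x) (fun x _ => hp.mem_support x)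
      (by rw [hp.length_support]; lia)
    have : Nonempty V := ⟨u⟩
    exact exists_isHamiltonian_of_isChain_adj hM fun x => (hperm.count_eq x).trans (hp x)
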